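/- (Expected weight enumerator of a random maximal-entanglement EAQEC code.) Let n ≥ 1 and 0 ≤ k ≤ n, and let 𝒱 be the (nonempty, finite) set of all F₂-subspaces S ⊆ V_n with dim S = 2(n−k) and S ∩ S^⊥ = {0}. Then for every integer w with 1 ≤ w ≤ n, Σ_{S ∈ 𝒱} |{v ∈ S^⊥ : wt(v) = w}| = |𝒱| · ((2^{2k}−1)/(2^{2n}−1)) · C(n,w) · 3^w; that is, the expected number of logical operators of weight w of a uniformly random maximal-entanglement [[n,k;n−k]] code is ((2^{2k}−1)/(2^{2n}−1))·C(n,w)·3^w. -/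

import Mathlib

open Finset

/-- The binary symplectic space modelling `n`-qubit Pauli operators modulo phases. -/
abbrev V (n : ℕ) := (Fin n → ZMod 2) × (Fin n → ZMod 2)

/-- The Pauli weight of `v = (x, z)`: the number of indices where `(x i, z i) ≠ (0,0)`. -/
def wt {n : ℕ} (v : V n) : ℕ :=
  (Finset.univ.filter fun i => ¬(v.1 i = 0 ∧ v.2 i = 0)).card

/-- The binary symplectic product. -/
def sympl {n : ℕ} (u v : V n) : ZMod 2 :=
  ∑ i, (u.1 i * v.2 i + u.2 i * v.1 i)

lemma sympl_add_left {n : ℕ} (a b w : V n) :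
    sympl (a + b) w = sympl a w + sympl b w := by
  simp only [sympl, Prod.fst_add, Prod.snd_add, Pi.add_apply, ← Finset.sum_add_distrib]
  exact Finset.sum_congr rfl fun i _ => by ring

lemma sympl_smul_left {n : ℕ} (c : ZMod 2) (a w : V n) :
    sympl (c • a) w = c * sympl a w := by
  simp only [sympl, Prod.smul_fst, Prod.smul_snd, Pi.smul_apply, smul_eq_mul,
    Finset.mul_sum]
  exact Finset.sum_congr rfl fun i _ => by ring

/-- The symplectic dual `W^⊥` of a subspace `W ⊆ V n`. -/
def sdual {n : ℕ} (W : Submodule (ZMod 2) (V n)) : Submodule (ZMod 2) (V n) where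
  carrier := {u | ∀ w ∈ W, sympl u w = 0}
  add_mem' := fun ha hb w hw => by
    rw [sympl_add_left, ha w hw, hb w hw, add_zero]
  zero_mem' := fun w hw => by simp [sympl]
  smul_mem' := fun c a ha w hw => by rw [sympl_smul_left, ha w hw, mul_zero]

open scoped Classical

/-!
Write `q` for the size of the field, `N` for the dimension of the ambient space and `d` for that of
the subspaces `S`. The isometries of a nondegenerate alternating form act transitively on nonzero
vectors: a single symplectic transvection moves `u` to `v` if `B u v ≠ 0`, and in general two
suffice, passing through a vector orthogonal to neither. A family `𝒱` that is stable under
isometries therefore has the same number `c` of members `S` with `v ∈ S^⊥` for each `v ≠ 0`.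
Double counting the pairs `(S, v)` with `0 ≠ v ∈ S^⊥` gives `#𝒱 (q^(N-d) - 1) = (q^N - 1) c`, and
the sum over `𝒱` of the number of weight-`w` vectors of `S^⊥` is `c` times the size of the Hamming
sphere of radius `w`.
-/

section Isometry

variable {R M N : Type*} [CommSemiring R] [AddCommMonoid M] [Module R M] [AddCommMonoid N]
  [Module R N] {B : LinearMap.BilinForm R M} {B' : LinearMap.BilinForm R N}

lemma apply_mem_orthogonal_map_iff (e : B.IsometryEquiv B') {S : Submodule R M} {x : M} :
    e x ∈ B'.orthogonal (S.map (e : M →ₗ[R] N)) ↔ x ∈ B.orthogonal S := by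
  simp only [LinearMap.BilinForm.mem_orthogonal_iff, Submodule.mem_map, forall_exists_index,
    and_imp, forall_apply_eq_imp_iff₂]
  exact forall₂_congr fun y _ => (e.map_app x y).congr_left

lemma map_inf_orthogonal_map_eq_bot (e : B.IsometryEquiv B') {S : Submodule R M}
    (hS : S ⊓ B.orthogonal S = ⊥) :
    S.map (e : M →ₗ[R] N) ⊓ B'.orthogonal (S.map (e : M →ₗ[R] N)) = ⊥ := by
  rw [Submodule.eq_bot_iff] at hS ⊢
  rintro _ ⟨⟨x, hx, rfl⟩, hx'⟩
  exact (congrArg e (hS x ⟨hx, (apply_mem_orthogonal_map_iff e).1 hx'⟩)).trans (map_zero e)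

end Isometry

section SymplecticTransvection

variable {R M : Type*} [CommRing R] [AddCommGroup M] [Module R M] {B : LinearMap.BilinForm R M}

/-- The symplectic transvection `x ↦ x + c B(a, x) a` of an alternating form `B`, as an isometry
of `B`. -/
def symplecticTransvection (hB : B.IsAlt) (c : R) (a : M) : B.IsometryEquiv B where
  __ := LinearEquiv.transvection (f := c • B a) (v := a) (by simp [hB a])
  map_app' x y := by
    change B (x + (c • B a) x • a) (y + (c • B a) y • a) = B x y
    simp only [map_add, map_smul, LinearMap.add_apply, LinearMap.smul_apply, smul_eq_mul, hB a,
      ← hB.neg_eq x a]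
    ring

lemma symplecticTransvection_apply (hB : B.IsAlt) (c : R) (a x : M) :
    symplecticTransvection hB c a x = x + (c * B a x) • a :=
  rfl

end SymplecticTransvection

lemma exists_apply_ne_zero_and_apply_ne_zero {R M : Type*} [Semiring R] [AddCommMonoid M]
    [Module R M] {f g : Module.Dual R M} (hf : f ≠ 0) (hg : g ≠ 0) : ∃ x, f x ≠ 0 ∧ g x ≠ 0 := by
  obtain ⟨a, ha⟩ := DFunLike.ne_iff.1 hf
  obtain ⟨b, hb⟩ := DFunLike.ne_iff.1 hg
  by_cases hga : g a = 0
  · by_cases hfb : f b = 0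
    · exact ⟨a + b, by simpa [hfb] using ha, by simpa [hga] using hb⟩
    · exact ⟨b, hfb, hb⟩
  · exact ⟨a, ha, hga⟩

section AlternatingForm

variable {K M : Type*} [Field K] [AddCommGroup M] [Module K M] {B : LinearMap.BilinForm K M}

lemma exists_isometryEquiv_apply_eq_of_apply_ne_zero (hB : B.IsAlt) {u v : M} (huv : B u v ≠ 0) :
    ∃ e : B.IsometryEquiv B, e u = v := by
  have hvu : B v u ≠ 0 := mt (hB.isRefl v u) huv
  refine ⟨symplecticTransvection hB (B v u)⁻¹ (v - u), ?_⟩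
  rw [symplecticTransvection_apply, map_sub, LinearMap.sub_apply, hB u, sub_zero,
    inv_mul_cancel₀ hvu, one_smul, add_sub_cancel]

lemma exists_isometryEquiv_apply_eq (hB : B.IsAlt) (hB' : B.Nondegenerate) {u v : M}
    (hu : u ≠ 0) (hv : v ≠ 0) : ∃ e : B.IsometryEquiv B, e u = v := by
  have apply_ne_zero {x : M} (hx : x ≠ 0) : B x ≠ 0 :=
    fun h => hx (hB'.1 x fun y => by rw [h, LinearMap.zero_apply])
  obtain ⟨w, huw, hvw⟩ :=
    exists_apply_ne_zero_and_apply_ne_zero (apply_ne_zero hu) (apply_ne_zero hv)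
  obtain ⟨e₁, rfl⟩ := exists_isometryEquiv_apply_eq_of_apply_ne_zero hB huw
  obtain ⟨e₂, he₂⟩ := exists_isometryEquiv_apply_eq_of_apply_ne_zero hB (mt (hB.isRefl _ _) hvw)
  exact ⟨e₁.trans e₂, he₂⟩

lemma card_filter_mem_orthogonal_eq (hB : B.IsAlt) (hB' : B.Nondegenerate)
    {𝒱 : Finset (Submodule K M)}
    (hmap : ∀ e : B.IsometryEquiv B, ∀ S ∈ 𝒱, S.map (e : M →ₗ[K] M) ∈ 𝒱)
    {u v : M} (hu : u ≠ 0) (hv : v ≠ 0) :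
    #{S ∈ 𝒱 | u ∈ B.orthogonal S} = #{S ∈ 𝒱 | v ∈ B.orthogonal S} := by
  have card_le {u v : M} (hu : u ≠ 0) (hv : v ≠ 0) :
      #{S ∈ 𝒱 | u ∈ B.orthogonal S} ≤ #{S ∈ 𝒱 | v ∈ B.orthogonal S} := by
    obtain ⟨e, rfl⟩ := exists_isometryEquiv_apply_eq hB hB' hu hv
    refine card_le_card_of_injOn (Submodule.map (e : M →ₗ[K] M)) (fun S hS => ?_)
      (Submodule.map_injective_of_injective e.injective).injOn
    obtain ⟨hS, huS⟩ := mem_filter.1 hS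
    exact mem_filter.2 ⟨hmap e S hS, (apply_mem_orthogonal_map_iff e).2 huS⟩
  exact (card_le hu hv).antisymm (card_le hv hu)

variable [Fintype K]

lemma card_filter_mem_and_ne_zero [Fintype M] (W : Submodule K M) :
    #{x : M | x ∈ W ∧ x ≠ 0} = Fintype.card K ^ Module.finrank K W - 1 := by
  rw [← filter_filter, ← Module.card_eq_pow_finrank, Fintype.card_subtype, filter_ne',
    card_erase_of_mem (by simp)]

variable [Finite M]

lemma card_mul_pow_sub_one_eq_mul_card_filter_mem_orthogonal (hB : B.IsAlt)
    (hB' : B.Nondegenerate) {d : ℕ} {𝒱 : Finset (Submodule K M)}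
    (hdim : ∀ S ∈ 𝒱, Module.finrank K S = d)
    (hmap : ∀ e : B.IsometryEquiv B, ∀ S ∈ 𝒱, S.map (e : M →ₗ[K] M) ∈ 𝒱)
    {v : M} (hv : v ≠ 0) :
    #𝒱 * (Fintype.card K ^ (Module.finrank K M - d) - 1) =
      (Fintype.card K ^ Module.finrank K M - 1) * #{S ∈ 𝒱 | v ∈ B.orthogonal S} := by
  have := Fintype.ofFinite M
  have card_ne_zero : #{x : M | x ≠ 0} = Fintype.card K ^ Module.finrank K M - 1 := by
    simpa using card_filter_mem_and_ne_zero (⊤ : Submodule K M)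
  rw [← card_ne_zero]
  refine card_mul_eq_card_mul (fun S x => x ∈ B.orthogonal S) (fun S hS => ?_) fun x hx => ?_
  · rw [bipartiteAbove, filter_filter, ← hdim S hS,
      ← LinearMap.BilinForm.finrank_orthogonal hB', ← card_filter_mem_and_ne_zero]
    simp only [and_comm]
  · exact card_filter_mem_orthogonal_eq hB hB' hmap (mem_filter.1 hx).2 hv

lemma pow_sub_one_mul_sum_card_filter_mem_orthogonal (hB : B.IsAlt) (hB' : B.Nondegenerate)
    {d : ℕ} {𝒱 : Finset (Submodule K M)} (hdim : ∀ S ∈ 𝒱, Module.finrank K S = d)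
    (hmap : ∀ e : B.IsometryEquiv B, ∀ S ∈ 𝒱, S.map (e : M →ₗ[K] M) ∈ 𝒱)
    {A : Finset M} (hA : 0 ∉ A) :
    (Fintype.card K ^ Module.finrank K M - 1) * ∑ S ∈ 𝒱, #{v ∈ A | v ∈ B.orthogonal S} =
      #A * (#𝒱 * (Fintype.card K ^ (Module.finrank K M - d) - 1)) := by
  calc (Fintype.card K ^ Module.finrank K M - 1) * ∑ S ∈ 𝒱, #{v ∈ A | v ∈ B.orthogonal S}
      = ∑ v ∈ A,
          (Fintype.card K ^ Module.finrank K M - 1) * #{S ∈ 𝒱 | v ∈ B.orthogonal S} := by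
        rw [← mul_sum]
        exact congrArg _ (sum_card_bipartiteAbove_eq_sum_card_bipartiteBelow _)
    _ = ∑ _v ∈ A, #𝒱 * (Fintype.card K ^ (Module.finrank K M - d) - 1) :=
        sum_congr rfl fun v hv =>
          (card_mul_pow_sub_one_eq_mul_card_filter_mem_orthogonal hB hB' hdim hmap
            (ne_of_mem_of_not_mem hv hA)).symm
    _ = #A * (#𝒱 * (Fintype.card K ^ (Module.finrank K M - d) - 1)) := by
        rw [sum_const, smul_eq_mul]

end AlternatingForm

section HammingSphere

variable {ι E : Type*} [Fintype ι] [Fintype E] [DecidableEq E] [Zero E]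

lemma card_filter_support_eq (T : Finset ι) :
    #{x : ι → E | ({i | x i ≠ 0} : Finset ι) = T} = (Fintype.card E - 1) ^ #T := by
  have support_eq_iff (x : ι → E) : ({i | x i ≠ 0} : Finset ι) = T ↔
      x ∈ Fintype.piFinset fun i => if i ∈ T then {0}ᶜ else {0} := by
    simp only [Finset.ext_iff, mem_filter_univ, Fintype.mem_piFinset]
    refine forall_congr' fun i => ?_
    split_ifs with hi <;> simp [hi]
  simp only [support_eq_iff, filter_univ_mem, Fintype.card_piFinset, apply_ite card, card_compl,
    card_singleton, prod_ite_mem, univ_inter, prod_const]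

lemma card_filter_hammingNorm_eq (w : ℕ) :
    #{x : ι → E | hammingNorm x = w} =
      (Fintype.card ι).choose w * (Fintype.card E - 1) ^ w := by
  have card_fiber (T : Finset ι) (hT : T ∈ powersetCard w univ) :
      #{x ∈ ({x | hammingNorm x = w} : Finset (ι → E)) | ({i | x i ≠ 0} : Finset ι) = T} =
        (Fintype.card E - 1) ^ w := by
    obtain rfl := (mem_powersetCard.1 hT).2
    rw [← card_filter_support_eq, filter_filter]
    congr 1 with x
    simp only [mem_filter_univ, and_iff_right_iff_imp]
    exact congrArg card
  rw [card_eq_sum_card_fiberwise (f := fun x => ({i | x i ≠ 0} : Finset ι))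
      (t := powersetCard w univ) fun x hx => by simpa [hammingNorm] using hx,
    sum_congr rfl card_fiber, sum_const, card_powersetCard, card_univ, smul_eq_mul]

end HammingSphere

/-- `φ` splits the phase space `M` into local phase spaces `E` indexed by the qudits `ι`, so that
`hammingNorm (φ v)` is the weight of `v`. -/
theorem expected_weight_enumerator_random_code_general {K M ι E : Type*} [Field K] [Fintype K]
    [AddCommGroup M] [Module K M] [Fintype M] [Nontrivial M] [Fintype ι] [Fintype E]
    [DecidableEq E] [Zero E] {B : LinearMap.BilinForm K M} (hB : B.IsAlt)
    (hB' : B.Nondegenerate) {φ : M ≃ (ι → E)} (hφ : φ 0 = 0) {d : ℕ}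
    {𝒱 : Finset (Submodule K M)} (hdim : ∀ S ∈ 𝒱, Module.finrank K S = d)
    (hmap : ∀ e : B.IsometryEquiv B, ∀ S ∈ 𝒱, S.map (e : M →ₗ[K] M) ∈ 𝒱) {w : ℕ} (hw : w ≠ 0) :
    ∑ S ∈ 𝒱, (#{v | v ∈ B.orthogonal S ∧ hammingNorm (φ v) = w} : ℚ) =
      #𝒱 * (((Fintype.card K : ℚ) ^ (Module.finrank K M - d) - 1) /
        ((Fintype.card K : ℚ) ^ Module.finrank K M - 1)) *
        (Fintype.card ι).choose w * ((Fintype.card E : ℚ) - 1) ^ w := by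
  have card_sphere : #{v : M | hammingNorm (φ v) = w} =
      (Fintype.card ι).choose w * (Fintype.card E - 1) ^ w := by
    rw [← card_filter_hammingNorm_eq]
    exact card_equiv φ (by simp)
  have zero_notMem_sphere : (0 : M) ∉ ({v | hammingNorm (φ v) = w} : Finset M) := by
    simpa [hφ] using hw.symm
  have count := congrArg (Nat.cast (R := ℚ)) <|
    pow_sub_one_mul_sum_card_filter_mem_orthogonal hB hB' hdim hmap zero_notMem_sphere
  have denom_ne_zero : (Fintype.card K : ℚ) ^ Module.finrank K M - 1 ≠ 0 :=
    sub_ne_zero.2 (one_lt_pow₀ (mod_cast Fintype.one_lt_card) Module.finrank_pos.ne').ne'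
  simp only [card_sphere, filter_filter, and_comm] at count
  push_cast [Nat.cast_pred (pow_pos Fintype.card_pos _), Nat.cast_pred (Fintype.card_pos (α := E))]
    at count
  rw [← mul_right_inj' denom_ne_zero, count]
  field_simp

section PauliSpace

variable {n : ℕ}

lemma sympl_comm (u v : V n) : sympl u v = sympl v u :=
  sum_congr rfl fun i _ => by ring

lemma sympl_self (u : V n) : sympl u u = 0 :=
  sum_eq_zero fun i _ => by rw [mul_comm (u.2 i), CharTwo.add_self_eq_zero]

variable (n) in
/-- The binary symplectic product as a bilinear form. -/
def symplForm : LinearMap.BilinForm (ZMod 2) (V n) :=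
  LinearMap.mk₂ (ZMod 2) sympl sympl_add_left sympl_smul_left
    (fun u v w => by simp only [sympl_comm u, sympl_add_left])
    (fun c u v => by simp only [sympl_comm u, sympl_smul_left, smul_eq_mul])

lemma symplForm_isAlt : (symplForm n).IsAlt :=
  sympl_self

lemma symplForm_nondegenerate : (symplForm n).Nondegenerate := by
  refine symplForm_isAlt.isRefl.nondegenerate_iff_separatingLeft.2 fun u hu =>
    Prod.ext (funext fun i => ?_) (funext fun i => ?_)
  · simpa [symplForm, sympl, Pi.single_apply] using hu (0, Pi.single i 1)
  · simpa [symplForm, sympl, Pi.single_apply] using hu (Pi.single i 1, 0)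

lemma sdual_eq_orthogonal (S : Submodule (ZMod 2) (V n)) :
    sdual S = (symplForm n).orthogonal S := by
  ext u
  exact forall₂_congr fun v _ => by rw [sympl_comm]; rfl

lemma wt_eq_hammingNorm (v : V n) :
    wt v = hammingNorm ((Equiv.arrowProdEquivProdArrow _ _ _).symm v) := by
  simp [wt, hammingNorm, Prod.ext_iff]

variable (n) in
lemma finrank_V : Module.finrank (ZMod 2) (V n) = 2 * n := by
  simp [two_mul]

end PauliSpace

/-- Expected weight enumerator of a random maximal-entanglement
`[[n,k;n−k]]` EAQEC code: for `1 ≤ w ≤ n`, the expected number of logical operators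
of weight `w` is `((2^{2k}−1)/(2^{2n}−1)) C(n,w) 3^w`. -/
theorem expected_weight_enumerator_random_code (n k : ℕ) (hn : 1 ≤ n) (hk : k ≤ n)
    (𝒱 : Finset (Submodule (ZMod 2) (V n)))
    (h𝒱 : ∀ S : Submodule (ZMod 2) (V n),
      S ∈ 𝒱 ↔ (Module.finrank (ZMod 2) S = 2 * (n - k) ∧ S ⊓ sdual S = ⊥))
    (hne : 𝒱.Nonempty)
    (w : ℕ) (hw1 : 1 ≤ w) (hwn : w ≤ n) :
    (∑ S ∈ 𝒱, ((Finset.univ.filter (fun v => v ∈ sdual S ∧ wt v = w)).card : ℚ)) =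
      (𝒱.card : ℚ) * ((2 ^ (2 * k) - 1) / (2 ^ (2 * n) - 1)) *
        (n.choose w) * 3 ^ w := by
  have : NeZero n := ⟨Nat.one_le_iff_ne_zero.1 hn⟩
  simp only [sdual_eq_orthogonal, wt_eq_hammingNorm] at h𝒱 ⊢
  have hdim S (hS : S ∈ 𝒱) : Module.finrank (ZMod 2) S = 2 * (n - k) := ((h𝒱 S).1 hS).1
  have hmap (e : (symplForm n).IsometryEquiv (symplForm n)) S (hS : S ∈ 𝒱) :
      S.map (e : V n →ₗ[ZMod 2] V n) ∈ 𝒱 :=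
    (h𝒱 _).2 ⟨(LinearEquiv.finrank_map_eq (e : V n ≃ₗ[ZMod 2] V n) S).trans (hdim S hS),
      map_inf_orthogonal_map_eq_bot e ((h𝒱 S).1 hS).2⟩
  have finrank_dual : 2 * n - 2 * (n - k) = 2 * k := by omega
  have card_pauli_sub_one : (Fintype.card (ZMod 2 × ZMod 2) : ℚ) - 1 = 3 := by norm_num
  simpa only [finrank_V, finrank_dual, card_pauli_sub_one, ZMod.card, Fintype.card_fin,
    Nat.cast_ofNat] using expected_weight_enumerator_random_code_general symplForm_isAlt
      symplForm_nondegenerate (φ := (Equiv.arrowProdEquivProdArrow _ _ _).symm) rfl hdim hmap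
      (Nat.one_le_iff_ne_zero.1 hw1)
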